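/- Let p be a prime with p ≡ 5 or 7 (mod 8). Then for every integer r ≥ 1: D((p^r − 1)/2) ≡ 0 (mod p). -/

import Mathlib

/-!
Write `p = 2m + 1`. All base-`p` digits of `(p^r - 1)/2` equal `m`, and Lucas' theorem for binomial
coefficients gives `D(pa + m) ≡ D(a) D(m) (mod p)` (`apD_lucas`), so it suffices to show
`p ∣ D(m)`.

MacMahon's formula (`apD_eq_macMahon`), which rests on
`C(a+b,a)² = ∑_j C(a,j) C(b,j) C(a+b+j,j)`, reads
`D(m) = ∑_j C(m+j,j) C(m,2j) C(2j,j) 2^(m-2j)`.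
Put `N = ⌊p/4⌋`. As `m ≡ -1/2`, one has
`C(m,2j) C(2j,j) ≡ 4^j (-1)^j C(N,j) C(N+j,N)`, and the numbers `(-1)^j C(N,j) C(N+j,N)` are the
coefficients of the shifted Legendre polynomial `P_N`. Thus `D(m) ≡ 2^m L(P_N)`, where `L` is the
linear functional `X^j ↦ C(m+j,j) ≡ (-1)^j C(m,j)`; it is the reduction of the arcsine moments
`C(2j,j)/4^j`. By Vandermonde's convolution `L` is invariant under `X ↦ 1 - X` on polynomials of
degree less than `p`, while `P_N(1 - X) = (-1)^N P_N(X)`. For `p ≡ 5, 7 (mod 8)` the integer `N` is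
odd, so `L(P_N) = -L(P_N) = 0`.
-/

/-- Zagier's sporadic Apéry-like sequence `D(n) = ∑_{k=0}^{n} C(n,k)³`. -/
def apD (n : ℕ) : ℤ :=
  ∑ k ∈ Finset.range (n + 1), (n.choose k : ℤ) ^ 3

/-! ### Vandermonde convolutions and MacMahon's formula -/

/-- A Vandermonde convolution with an offset: `∑_j C(a,j) C(b,j+t) = C(a+b,a+t)`. -/
lemma sum_choose_mul_choose_add (a b t : ℕ) :
    ∑ j ∈ Finset.range (a + 1), a.choose j * b.choose (j + t) = (a + b).choose (a + t) := by
  induction a generalizing t with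
  | zero => simp
  | succ a ih =>
    have h : ∑ j ∈ Finset.range (a + 1), a.choose (j + 1) * b.choose (j + 1 + t)
        + b.choose t = (a + b).choose (a + t) := by
      rw [← ih t, Finset.sum_range_succ, Finset.sum_range_succ']
      simp
    rw [Finset.sum_range_succ']
    simp only [Nat.choose_succ_succ', add_mul, Finset.sum_add_distrib]
    have h2 := ih (t + 1)
    simp only [Nat.choose_zero_right, zero_add, one_mul]
    rw [show a + 1 + b = a + b + 1 by ring, show a + 1 + t = a + t + 1 by ring,
      Nat.choose_succ_succ', ← h, show a + t + 1 = a + (t + 1) by ring, ← h2]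
    simp only [show ∀ j, j + (t + 1) = j + 1 + t from fun j => by ring]
    ring

/-- Both sides count the ways to pick disjoint subsets of sizes `i` and `a` from `n` points. -/
lemma choose_mul_choose_sub (n i a : ℕ) :
    n.choose i * (n - i).choose a = n.choose a * (n - a).choose i := by
  have h1 := Nat.choose_mul (n := n) (k := a + i) (s := i) (by omega)
  have h2 := Nat.choose_mul (n := n) (k := a + i) (s := a) (by omega)
  rw [Nat.add_sub_cancel] at h1
  rw [Nat.add_sub_cancel_left] at h2
  rw [← h1, ← h2, Nat.choose_symm_add]

/-- `C(a,j) C(j,i) = C(a,i) C(a-i,j-i)` followed by a Vandermonde convolution. -/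
lemma sum_choose_triple (a b i : ℕ) (hi : i ≤ a) :
    ∑ j ∈ Finset.range (a + 1), a.choose j * b.choose j * j.choose i
      = a.choose i * (a + b - i).choose a := by
  obtain ⟨d, rfl⟩ := Nat.exists_eq_add_of_le hi
  rw [show i + d + 1 = i + (d + 1) by ring, Finset.sum_range_add]
  have h0 : ∑ j ∈ Finset.range i, (i + d).choose j * b.choose j * j.choose i = 0 :=
    Finset.sum_eq_zero fun j hj => by
      rw [Nat.choose_eq_zero_of_lt (Finset.mem_range.1 hj), mul_zero]
  rw [h0, zero_add, show i + d + b - i = d + b by omega, add_comm i d,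
    ← sum_choose_mul_choose_add d b i, Finset.mul_sum]
  refine Finset.sum_congr rfl fun t _ => ?_
  have h := Nat.choose_mul (n := d + i) (k := i + t) (s := i) (by omega)
  rw [Nat.add_sub_cancel, Nat.add_sub_cancel_left] at h
  rw [mul_right_comm, h, add_comm t i]
  ring

/-- The square of a binomial coefficient as a sum of triple products (a form of the
Pfaff–Saalschütz summation). -/
lemma choose_sq_eq_sum (a b : ℕ) :
    (a + b).choose a ^ 2 =
      ∑ j ∈ Finset.range (a + 1), a.choose j * b.choose j * (a + b + j).choose j := by
  have h1 : ∀ j ∈ Finset.range (a + 1), a.choose j * b.choose j * (a + b + j).choose j =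
      ∑ i ∈ Finset.range (a + 1), a.choose j * b.choose j * j.choose i * (a + b).choose i := by
    intro j hj
    have hv := sum_choose_mul_choose_add j (a + b) 0
    simp only [add_zero] at hv
    rw [show a + b + j = j + (a + b) by ring, ← hv, Finset.mul_sum]
    have hja : j + 1 ≤ a + 1 := by have := Finset.mem_range.1 hj; omega
    simp only [mul_assoc]
    refine Finset.sum_subset (by simpa using hja) fun i _ hi => ?_
    rw [Nat.choose_eq_zero_of_lt (n := j) (k := i) (by simpa using hi)]
    simp
  rw [Finset.sum_congr rfl h1, Finset.sum_comm]
  have h2 : ∀ i ∈ Finset.range (a + 1),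
      ∑ j ∈ Finset.range (a + 1), a.choose j * b.choose j * j.choose i * (a + b).choose i
      = (a + b).choose a * (a.choose i * b.choose i) := by
    intro i hi
    rw [← Finset.sum_mul, sum_choose_triple a b i (by have := Finset.mem_range.1 hi; omega)]
    have h := choose_mul_choose_sub (a + b) i a
    rw [Nat.add_sub_cancel_left] at h
    calc _ = a.choose i * ((a + b).choose i * (a + b - i).choose a) := by ring
      _ = _ := by rw [h]; ring
  rw [Finset.sum_congr rfl h2, ← Finset.mul_sum]
  have hv := sum_choose_mul_choose_add a b 0
  simp only [add_zero] at hv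
  rw [hv, sq]

lemma sum_choose_mul_choose_mul_choose (n j : ℕ) :
    ∑ k ∈ Finset.range (n + 1), n.choose k * (k.choose j * (n - k).choose j)
      = n.choose (2 * j) * (2 * j).choose j * 2 ^ (n - 2 * j) := by
  have hA := Nat.choose_mul (n := n) (k := 2 * j) (s := j) (by omega)
  rw [show 2 * j - j = j by omega] at hA
  rw [hA]
  have hterm : ∀ k, n.choose k * (k.choose j * (n - k).choose j) =
      if j ≤ k then n.choose j * (n - j).choose j * (n - 2 * j).choose (k - j) else 0 := by
    intro k
    split_ifs with h
    · obtain ⟨t, rfl⟩ := Nat.exists_eq_add_of_le h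
      have h1 := Nat.choose_mul (n := n) (k := j + t) (s := j) (by omega)
      have h2 := choose_mul_choose_sub (n - j) t j
      rw [Nat.add_sub_cancel_left] at h1 ⊢
      rw [← mul_assoc, h1, mul_assoc, ← Nat.sub_sub, h2, mul_assoc,
        show n - 2 * j = n - j - j by omega]
    · rw [Nat.choose_eq_zero_of_lt (n := k) (by omega)]
      simp
  rw [Finset.sum_congr rfl fun k _ => hterm k]
  by_cases hj : 2 * j ≤ n
  · obtain ⟨d, rfl⟩ := Nat.exists_eq_add_of_le hj
    rw [show 2 * j + d + 1 = j + (d + 1 + j) by ring, Finset.sum_range_add, Finset.sum_range_add]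
    have h0 : ∀ c : ℕ, ∑ x ∈ Finset.range j, (if j ≤ x then
        c * (2 * j + d - 2 * j).choose (x - j) else 0) = 0 :=
      fun c => Finset.sum_eq_zero fun x hx => by
        rw [if_neg (by have := Finset.mem_range.1 hx; omega)]
    rw [h0, zero_add]
    simp only [Nat.add_sub_cancel_left, Nat.le_add_right, if_true]
    rw [← Finset.mul_sum, Nat.sum_range_choose, Finset.sum_eq_zero (s := Finset.range j), add_zero]
    intro x _
    rw [Nat.choose_eq_zero_of_lt (n := d) (by omega), mul_zero]
  · rw [Nat.choose_eq_zero_of_lt (n := n - j) (k := j) (by omega)]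
    simp

/-- MacMahon's formula for the sum of the cubes of the binomial coefficients. -/
lemma apD_eq_macMahon (n : ℕ) :
    apD n = ((∑ j ∈ Finset.range (n + 1),
      (n + j).choose j * (n.choose (2 * j) * (2 * j).choose j * 2 ^ (n - 2 * j)) : ℕ) : ℤ) := by
  have h : ∀ k ∈ Finset.range (n + 1), n.choose k ^ 3 = ∑ j ∈ Finset.range (n + 1),
      (n + j).choose j * (n.choose k * (k.choose j * (n - k).choose j)) := by
    intro k hk
    obtain ⟨b, rfl⟩ := Nat.exists_eq_add_of_le (Nat.lt_succ_iff.1 (Finset.mem_range.1 hk))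
    rw [pow_succ, choose_sq_eq_sum, Finset.sum_mul, Nat.add_sub_cancel_left]
    refine (Finset.sum_subset (by simp) fun i _ hi => ?_).trans
      (Finset.sum_congr rfl fun j _ => by ring)
    rw [Nat.choose_eq_zero_of_lt (n := k) (k := i) (by simpa using hi)]
    simp
  unfold apD
  simp only [← sum_choose_mul_choose_mul_choose n, Finset.mul_sum]
  rw [Finset.sum_comm, ← Finset.sum_congr rfl h]
  push_cast
  rfl

/-! ### Binomial coefficients modulo `p = 2m + 1` -/

section ModP

variable {p : ℕ} [Fact p.Prime]

lemma natCast_succ_ne_zero {j : ℕ} (hj : j + 1 < p) : ((j : ZMod p) + 1) ≠ 0 := by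
  intro h
  have h' : ((j + 1 : ℕ) : ZMod p) = 0 := by push_cast; exact h
  rw [ZMod.natCast_eq_zero_iff] at h'
  exact absurd (Nat.le_of_dvd (by omega) h') (by omega)

/-- The recurrence `C(n,k+1)(k+1) = C(n,k)(n-k)` with the subtraction taken in a ring. -/
lemma cast_choose_succ {R : Type*} [CommRing R] (n k : ℕ) :
    (n.choose (k + 1) : R) * (k + 1) = n.choose k * (n - k) := by
  have h := Nat.choose_succ_right_eq n k
  rcases le_or_gt k n with hk | hk
  · have := congrArg (Nat.cast (R := R)) h
    push_cast [Nat.cast_sub hk] at this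
    exact this
  · rw [Nat.choose_eq_zero_of_lt hk, Nat.choose_eq_zero_of_lt (by omega)]
    simp

lemma cast_choose_add_succ {R : Type*} [CommRing R] (n j : ℕ) :
    ((n + (j + 1)).choose n : R) * (j + 1) = (n + j).choose n * (n + j + 1) := by
  have h := Nat.choose_mul_succ_eq (n + j) n
  rw [show n + j + 1 - n = j + 1 by omega] at h
  have := congrArg (Nat.cast (R := R)) h
  push_cast at this
  exact this.symm

/-- Since `m ≡ -1/2`, the rising factorial of `m + 1` agrees with that of `-m` modulo `p`. -/
lemma choose_add_eq_neg_one_pow {m : ℕ} (hm : 2 * m + 1 = p) (j : ℕ) (hj : j < p) :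
    ((m + j).choose m : ZMod p) = (-1) ^ j * m.choose j := by
  have hp : (2 * m + 1 : ZMod p) = 0 := by
    have : ((2 * m + 1 : ℕ) : ZMod p) = 0 := by rw [hm]; simp
    exact_mod_cast this
  induction j with
  | zero => simp
  | succ j ih =>
    refine mul_right_cancel₀ (natCast_succ_ne_zero hj) ?_
    rw [cast_choose_add_succ, ih (by omega), mul_assoc, mul_assoc, cast_choose_succ]
    linear_combination (-1) ^ j * (m.choose j : ZMod p) * hp

/-- Modulo `p`, the coefficients in MacMahon's formula at `m = (p-1)/2` are, up to the factor
`4 ^ j`, those of the shifted Legendre polynomial of degree `N = ⌊p/4⌋`. -/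
lemma choose_mul_central_eq {m N : ℕ} (hm : 2 * m + 1 = p) (hN : m = 2 * N ∨ m = 2 * N + 1)
    (j : ℕ) (hj : j < p) :
    (m.choose (2 * j) * (2 * j).choose j : ZMod p)
      = 4 ^ j * ((-1) ^ j * N.choose j * (N + j).choose N) := by
  have hp : (2 * m + 1 : ZMod p) = 0 := by
    have : ((2 * m + 1 : ℕ) : ZMod p) = 0 := by rw [hm]; simp
    exact_mod_cast this
  have hq : ∀ j : ℕ, ((m : ZMod p) - 2 * j) * (m - 2 * j - 1) = -4 * ((N - j) * (N + j + 1)) := by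
    intro j
    rcases hN with h | h
    · have h' : (m : ZMod p) = 2 * N := by rw [h]; push_cast; rfl
      rw [h'] at hp ⊢
      linear_combination 2 * (N - j : ZMod p) * hp
    · have h' : (m : ZMod p) = 2 * N + 1 := by rw [h]; push_cast; rfl
      rw [h'] at hp ⊢
      linear_combination 2 * (N - j : ZMod p) * hp
  induction j with
  | zero => simp
  | succ j ih =>
    have hj0 := natCast_succ_ne_zero hj
    refine mul_right_cancel₀ (mul_ne_zero hj0 hj0) ?_
    have h1 := cast_choose_succ (R := ZMod p) m (2 * j)
    have h2 := cast_choose_succ (R := ZMod p) m (2 * j + 1)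
    have h3 := congrArg (Nat.cast (R := ZMod p)) (Nat.succ_mul_centralBinom_succ j)
    have h4 := cast_choose_succ (R := ZMod p) N j
    have h5 := cast_choose_add_succ (R := ZMod p) N j
    simp only [Nat.centralBinom] at h3
    push_cast at h1 h2 h3
    rw [show 2 * j + 1 + 1 = 2 * (j + 1) by ring] at h2
    have ih := ih (by omega)
    have hL : (m.choose (2 * (j + 1)) * (2 * (j + 1)).choose (j + 1) : ZMod p)
        * ((j + 1) * (j + 1)) =
        m.choose (2 * j) * (2 * j).choose j * ((m - 2 * j) * (m - 2 * j - 1)) := by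
      linear_combination (m.choose (2 * (j + 1)) : ZMod p) * (j + 1) * h3
        + ((2 * j).choose j : ZMod p) * (2 * j + 1) * h2
        + ((2 * j).choose j : ZMod p) * (m - (2 * j + 1)) * h1
    rw [hL, hq, ih]
    calc _ = 4 ^ (j + 1) * (-1) ^ (j + 1) * ((N.choose j : ZMod p) * (N - j))
          * ((N + j).choose N * (N + j + 1)) := by ring
      _ = _ := by rw [← h4, ← h5]; ring

/-! ### Vanishing of the Legendre sum -/

open Polynomial in
/-- The sum `∑_j (-1)^j C(N,j) C(N+j,N) C(2j,j) / 4^j`, reduced modulo `p = 2m+1`, vanishes for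
odd `N`. Here `C(2j,j) / 4^j` is replaced by its residue `C(m+j,m)`. -/
lemma sum_legendre_eq_zero {m N : ℕ} (hm : 2 * m + 1 = p) (hNm : N ≤ m) (hodd : Odd N) :
    ∑ j ∈ Finset.range (N + 1),
      ((-1) ^ j * N.choose j * (N + j).choose N * (m + j).choose m : ZMod p) = 0 := by
  -- `L` sends `X ^ j` to `(-1)^j C(m,j)`; it is invariant under `X ↦ 1 - X` in degrees `< p`.
  let L : ℤ[X] →ₗ[ℤ] ZMod p := Polynomial.lsum fun k =>
    LinearMap.toSpanSingleton ℤ (ZMod p) ((-1) ^ k * m.choose k)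
  have hL : ∀ (a : ℤ) (k : ℕ), L (C a * X ^ k) = a * ((-1) ^ k * m.choose k) := by
    intro a k
    rw [C_mul_X_pow_eq_monomial]
    simp [L, Polynomial.lsum_apply, Polynomial.sum_monomial_index]
  have hL' : ∀ (a : ℤ) (j : ℕ), L (C a * (1 - X) ^ j) = a * (m + j).choose m := by
    intro a j
    have hexp : (C a * (1 - X) ^ j : ℤ[X]) =
        ∑ k ∈ Finset.range (j + 1), C (a * ((-1) ^ k * j.choose k)) * X ^ k := by
      rw [sub_eq_neg_add, add_pow, Finset.mul_sum]
      refine Finset.sum_congr rfl fun k _ => ?_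
      rw [neg_pow]
      simp
      ring
    rw [hexp, map_sum]
    have hv := congrArg (Nat.cast (R := ZMod p)) (sum_choose_mul_choose_add j m 0)
    simp only [add_zero] at hv
    rw [Nat.choose_symm_add, add_comm j m] at hv
    push_cast at hv
    rw [← hv, Finset.mul_sum]
    refine Finset.sum_congr rfl fun k _ => ?_
    have hsq : ((-1) ^ k * (-1) ^ k : ZMod p) = 1 := by rw [← mul_pow]; simp
    rw [hL]
    push_cast
    linear_combination (a * j.choose k * m.choose k : ZMod p) * hsq
  have hcoef : shiftedLegendre N = ∑ k ∈ Finset.range (N + 1),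
      C ((-1 : ℤ) ^ k * N.choose k * (N + k).choose N) * X ^ k := rfl
  have hS : L (shiftedLegendre N) = ∑ j ∈ Finset.range (N + 1),
      ((-1) ^ j * N.choose j * (N + j).choose N * (m + j).choose m : ZMod p) := by
    rw [hcoef, map_sum]
    refine Finset.sum_congr rfl fun j hj => ?_
    have hjN := Finset.mem_range.1 hj
    rw [hL, choose_add_eq_neg_one_pow hm j (by omega)]
    push_cast
    rfl
  have hS' : L ((shiftedLegendre N).comp (1 - X)) = ∑ j ∈ Finset.range (N + 1),
      ((-1) ^ j * N.choose j * (N + j).choose N * (m + j).choose m : ZMod p) := by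
    rw [hcoef, Polynomial.sum_comp, map_sum]
    refine Finset.sum_congr rfl fun j _ => ?_
    rw [mul_comp, C_comp, pow_comp, X_comp, hL']
    push_cast
    rfl
  have hsymm := neg_one_pow_mul_shiftedLegendre_comp_one_sub_X_eq N
  rw [hodd.neg_one_pow, neg_one_mul] at hsymm
  have h := congrArg L hsymm
  rw [map_neg, hS, hS'] at h
  have h2 : (2 : ZMod p) ≠ 0 :=
    Ring.two_ne_zero (by rw [ZMod.ringChar_zmod_n]; omega)
  refine (mul_eq_zero.1 ?_).resolve_left h2
  linear_combination -h

/-- The case `r = 1`. -/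
lemma apD_half_eq_zero {m N : ℕ} (hm : 2 * m + 1 = p) (hN : m = 2 * N ∨ m = 2 * N + 1)
    (hodd : Odd N) : (apD m : ZMod p) = 0 := by
  rw [apD_eq_macMahon]
  have hterm : ∀ j ∈ Finset.range (m + 1), ((m + j).choose j : ZMod p) *
      (m.choose (2 * j) * (2 * j).choose j * 2 ^ (m - 2 * j)) = 2 ^ m *
      ((-1) ^ j * N.choose j * (N + j).choose N * (m + j).choose m) := by
    intro j hj
    have hjm := Finset.mem_range.1 hj
    rw [← Nat.choose_symm_add, choose_mul_central_eq hm hN j (by omega)]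
    by_cases h : j ≤ N
    · rw [show (2 : ZMod p) ^ m = 2 ^ (m - 2 * j) * 4 ^ j by
        rw [show (4 : ZMod p) = 2 ^ 2 by norm_num, ← pow_mul, ← pow_add]
        congr 1
        omega]
      ring
    · rw [Nat.choose_eq_zero_of_lt (n := N) (k := j) (by omega)]
      simp
  push_cast
  rw [Finset.sum_congr rfl hterm, ← Finset.mul_sum]
  have hNm : N ≤ m := by omega
  rw [← Finset.sum_subset (s₁ := Finset.range (N + 1)), sum_legendre_eq_zero hm hNm hodd, mul_zero]
  · simpa using hNm
  · intro j _ hj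
    rw [Nat.choose_eq_zero_of_lt (n := N) (k := j) (by simpa using hj)]
    simp

/-! ### The Lucas congruence -/

lemma sum_range_mul_eq {M : Type*} [AddCommMonoid M] (f : ℕ → M) (q a : ℕ) :
    ∑ k ∈ Finset.range (q * a), f k =
      ∑ i ∈ Finset.range a, ∑ s ∈ Finset.range q, f (q * i + s) := by
  induction a with
  | zero => simp
  | succ a ih => rw [Nat.mul_succ, Finset.sum_range_add, ih, Finset.sum_range_succ]

/-- The Lucas congruence `D(p a + m) ≡ D(a) D(m)` for `m < p`. -/
lemma apD_lucas (a m : ℕ) (hm : m < p) :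
    (apD (p * a + m) : ZMod p) = apD a * apD m := by
  have hext : ∀ n K, n < K → (apD n : ZMod p) = ∑ k ∈ Finset.range K, (n.choose k : ZMod p) ^ 3 := by
    intro n K hK
    unfold apD
    push_cast
    refine Finset.sum_subset (by simpa using hK) fun k _ hk => ?_
    rw [Nat.choose_eq_zero_of_lt (by simpa using hk)]
    simp
  rw [hext (p * a + m) (p * (a + 1)) (by rw [Nat.mul_succ]; omega), hext a (a + 1) (by omega),
    hext m p hm, sum_range_mul_eq, Finset.sum_mul_sum]
  refine Finset.sum_congr rfl fun i _ => Finset.sum_congr rfl fun s hs => ?_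
  have hs := Finset.mem_range.1 hs
  have hp0 : 0 < p := by omega
  have h := (ZMod.intCast_eq_intCast_iff _ _ p).2
    (Choose.choose_modEq_choose_mod_mul_choose_div (n := p * a + m) (k := p * i + s) (p := p))
  simp only [Nat.mul_add_mod, Nat.mod_eq_of_lt hm, Nat.mod_eq_of_lt hs, Nat.mul_add_div hp0,
    Nat.div_eq_of_lt hm, Nat.div_eq_of_lt hs, add_zero] at h
  push_cast at h
  rw [h]
  ring

end ModP

/-- Theorem 1.8 (case `p ≡ 5, 7 (mod 8)`): `D((p^r−1)/2) ≡ 0 (mod p)`. -/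
theorem apD_congruence_inert (p : ℕ) (hp : p.Prime) (hp8 : p % 8 = 5 ∨ p % 8 = 7)
    (r : ℕ) (hr : 1 ≤ r) :
    apD ((p ^ r - 1) / 2) ≡ 0 [ZMOD (p : ℤ)] := by
  have : Fact p.Prime := ⟨hp⟩
  obtain ⟨r, rfl⟩ := Nat.exists_eq_add_of_le' hr
  -- `(p^(r+1) - 1)/2 = p · (p^r - 1)/2 + (p - 1)/2`.
  have hsplit : (p ^ (r + 1) - 1) / 2 = p * ((p ^ r - 1) / 2) + p / 2 := by
    have hodd : p % 2 = 1 := by omega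
    have hr1 : p ^ r % 2 = 1 := by rw [Nat.pow_mod, hodd]; simp
    obtain ⟨b, hb⟩ : ∃ b, p ^ r = 2 * b + 1 := ⟨p ^ r / 2, by omega⟩
    have hpow : p ^ (r + 1) = 2 * (p * b) + p := by rw [pow_succ, hb]; ring
    rw [hpow, hb, show (2 * b + 1 - 1) / 2 = b by omega]
    omega
  have hodd : Odd (p / 4) := by rw [Nat.odd_iff]; omega
  have h := apD_half_eq_zero (p := p) (m := p / 2) (N := p / 4) (by omega) (by omega) hodd
  refine (ZMod.intCast_eq_intCast_iff _ _ p).1 ?_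
  rw [hsplit, apD_lucas _ _ (by omega), h]
  simp
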